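/- arXiv:2404.18639 — 3 statements merged into one kernel-verified Lean document; each statement's English description precedes it below -/
import Mathlib

section
/- Let E be a real n×m matrix with EᵀE = I_m, and define the real symmetric (n+m)×(n+m) block matrix M̄ := [[Iₙ + E Eᵀ, E], [Eᵀ, I_m]]. Then ((M̄ − I)² − (M̄ − I))² = (M̄ − I)² − (M̄ − I), and consequently every eigenvalue of M̄ belongs to the set {(3 − √5)/2, 1, 2, (3 + √5)/2}. -/
open Matrix

/-!
Put `A = M̄ - 1 = [[EEᵀ, E], [Eᵀ, 0]]`. Since `EᵀE = 1`, the square of `A` is `A` plus the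
block-diagonal projection `diag(EEᵀ, 1)`. Hence an eigenvalue `t` of `A` has `t² - t ∈ {0, 1}`:
either `t ∈ {0, 1}`, or `t` is a root of `t² = t + 1`, that is, the golden ratio or its conjugate.
-/

section BlockMatrix

variable {ι κ R : Type*}

theorem fromBlocks_one_add_one_sub_one [DecidableEq ι] [DecidableEq κ] [AddCommGroupWithOne R]
    (A : Matrix ι ι R) (B : Matrix ι κ R) (C : Matrix κ ι R) :
    fromBlocks (1 + A) B C 1 - 1 = fromBlocks A B C 0 := by
  rw [sub_eq_iff_eq_add', ← fromBlocks_one, fromBlocks_add]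
  simp only [zero_add, add_zero]

variable [Fintype ι] [Fintype κ]

theorem isIdempotentElem_fromBlocks_diagonal [NonUnitalNonAssocSemiring R] {P : Matrix ι ι R}
    {Q : Matrix κ κ R} (hP : IsIdempotentElem P) (hQ : IsIdempotentElem Q) :
    IsIdempotentElem (fromBlocks P 0 0 Q) := by
  simp [IsIdempotentElem, fromBlocks_multiply, hP.eq, hQ.eq]

variable [DecidableEq κ]

theorem isIdempotentElem_mul_of_mul_eq_one [Semiring R] {E : Matrix ι κ R} {F : Matrix κ ι R}
    (hFE : F * E = 1) : IsIdempotentElem (E * F) := by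
  rw [IsIdempotentElem, Matrix.mul_assoc, ← Matrix.mul_assoc F, hFE, Matrix.one_mul]

variable [DecidableEq ι] [Ring R] {E : Matrix ι κ R} {F : Matrix κ ι R}

theorem fromBlocks_sq_sub_self (hFE : F * E = 1) :
    fromBlocks (E * F) E F 0 ^ 2 - fromBlocks (E * F) E F 0 = fromBlocks (E * F) 0 0 1 := by
  have hEFE : E * F * E = E := by rw [Matrix.mul_assoc, hFE, Matrix.mul_one]
  have hFEF : F * (E * F) = F := by rw [← Matrix.mul_assoc, hFE, Matrix.one_mul]
  rw [sub_eq_iff_eq_add, sq, fromBlocks_multiply, fromBlocks_add,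
    (isIdempotentElem_mul_of_mul_eq_one hFE).eq, hEFE, hFEF, hFE]
  simp only [Matrix.zero_mul, Matrix.mul_zero, zero_add, add_zero]

theorem isIdempotentElem_fromBlocks_sub_one_sq_sub_self (hFE : F * E = 1) :
    IsIdempotentElem ((fromBlocks (1 + E * F) E F 1 - 1) ^ 2 -
      (fromBlocks (1 + E * F) E F 1 - 1)) := by
  rw [fromBlocks_one_add_one_sub_one, fromBlocks_sq_sub_self hFE]
  exact isIdempotentElem_fromBlocks_diagonal (isIdempotentElem_mul_of_mul_eq_one hFE) .one

end BlockMatrix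

section Eigenvalue

theorem eq_or_eq_one_sub_of_sq_sub_self_eq {S : Type*} [CommRing S] [NoZeroDivisors S] {s t : S}
    (h : t ^ 2 - t = s ^ 2 - s) : t = s ∨ t = 1 - s := by
  have hfactor : (t - s) * (t - (1 - s)) = 0 := by linear_combination h
  simpa only [mul_eq_zero, sub_eq_zero] using hfactor

variable {ι S : Type*} [Fintype ι] [CommRing S] {A : Matrix ι ι S} {v : ι → S} {t : S}

theorem sq_sub_self_mulVec_of_mulVec_eq_smul [DecidableEq ι] (hv : A *ᵥ v = t • v) :
    (A ^ 2 - A) *ᵥ v = (t ^ 2 - t) • v := by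
  rw [sub_mulVec, sq, ← mulVec_mulVec, hv, mulVec_smul, hv, smul_smul, ← sub_smul, ← sq]

variable [NoZeroDivisors S]

theorem eq_zero_or_one_of_isIdempotentElem_of_mulVec_eq_smul (hA : IsIdempotentElem A)
    (hv₀ : v ≠ 0) (hv : A *ᵥ v = t • v) : t = 0 ∨ t = 1 := by
  have ht : (t ^ 2) • v = t • v := by
    rw [sq, mul_smul, ← hv, ← mulVec_smul, ← hv, mulVec_mulVec, hA.eq]
  have ht_sub : t ^ 2 - t = 0 :=
    (smul_eq_zero.mp (by rw [sub_smul, ht, sub_self])).resolve_right hv₀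
  simpa using eq_or_eq_one_sub_of_sq_sub_self_eq (t := t) (s := 0) (by simpa using ht_sub)

theorem eigenvalue_of_isIdempotentElem_sq_sub_self [DecidableEq ι] {φ : S} (hφ : φ ^ 2 = φ + 1)
    (hA : IsIdempotentElem (A ^ 2 - A)) (hv₀ : v ≠ 0) (hv : A *ᵥ v = t • v) :
    t = 1 - φ ∨ t = 0 ∨ t = 1 ∨ t = φ := by
  rcases eq_zero_or_one_of_isIdempotentElem_of_mulVec_eq_smul hA hv₀
    (sq_sub_self_mulVec_of_mulVec_eq_smul hv) with ht | ht
  · have ht_zero_one := eq_or_eq_one_sub_of_sq_sub_self_eq (t := t) (s := 0) (by simpa using ht)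
    grind
  · have ht_golden := eq_or_eq_one_sub_of_sq_sub_self_eq (t := t) (s := φ)
      (by linear_combination ht - hφ)
    tauto

end Eigenvalue

theorem Mbar_eigenvalues_general {ι κ R S : Type*} [Fintype ι] [DecidableEq ι] [Fintype κ]
    [DecidableEq κ] [Ring R] [CommRing S] [NoZeroDivisors S] (f : R →+* S)
    {E : Matrix ι κ R} {F : Matrix κ ι R} (hFE : F * E = 1) {φ : S} (hφ : φ ^ 2 = φ + 1) :
    ((fromBlocks (1 + E * F) E F 1 - 1) ^ 2 - (fromBlocks (1 + E * F) E F 1 - 1)) ^ 2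
      = (fromBlocks (1 + E * F) E F 1 - 1) ^ 2 - (fromBlocks (1 + E * F) E F 1 - 1) ∧
    ∀ (μ : S) (v : ι ⊕ κ → S), v ≠ 0 → (fromBlocks (1 + E * F) E F 1).map f *ᵥ v = μ • v →
      μ = 2 - φ ∨ μ = 1 ∨ μ = 2 ∨ μ = 1 + φ := by
  have hidem := isIdempotentElem_fromBlocks_sub_one_sq_sub_self hFE
  refine ⟨by rw [sq, hidem.eq], fun μ v hv₀ hv ↦ ?_⟩
  have hmap := hidem.map f.mapMatrix
  simp only [map_sub, map_pow, map_one, RingHom.mapMatrix_apply] at hmap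
  have hshift : ((fromBlocks (1 + E * F) E F 1).map f - 1) *ᵥ v = (μ - 1) • v := by
    rw [sub_mulVec, hv, one_mulVec, sub_smul, one_smul]
  have hcases := eigenvalue_of_isIdempotentElem_sq_sub_self hφ hmap hv₀ hshift
  grind

theorem ofReal_three_sub_sqrt_five_div_two :
    (((3 - √5) / 2 : ℝ) : ℂ) = 2 - (Real.goldenRatio : ℂ) := by
  push_cast [Real.goldenRatio]
  ring

theorem ofReal_three_add_sqrt_five_div_two :
    (((3 + √5) / 2 : ℝ) : ℂ) = 1 + (Real.goldenRatio : ℂ) := by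
  push_cast [Real.goldenRatio]
  ring

/-- if `EᵀE = I` then `M̄ := [[I + EEᵀ, E], [Eᵀ, I]]` satisfies
`((M̄ − I)² − (M̄ − I))² = (M̄ − I)² − (M̄ − I)`, and every eigenvalue of `M̄` belongs to
`{(3 − √5)/2, 1, 2, (3 + √5)/2}`. -/
theorem Mbar_eigenvalues
    (n m : ℕ) (hn : 0 < n) (hm : 0 < m) (hmn : m ≤ n)
    (E : Matrix (Fin n) (Fin m) ℝ) (hE : Eᵀ * E = 1) :
    ((fromBlocks (1 + E * Eᵀ) E Eᵀ 1 - 1) ^ 2 - (fromBlocks (1 + E * Eᵀ) E Eᵀ 1 - 1)) ^ 2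
      = (fromBlocks (1 + E * Eᵀ) E Eᵀ 1 - 1) ^ 2 - (fromBlocks (1 + E * Eᵀ) E Eᵀ 1 - 1) ∧
    (∀ (μ : ℂ) (v : Fin n ⊕ Fin m → ℂ), v ≠ 0 →
      (fromBlocks (1 + E * Eᵀ) E Eᵀ 1 : Matrix (Fin n ⊕ Fin m) (Fin n ⊕ Fin m) ℝ).map
          (Complex.ofReal) *ᵥ v = μ • v →
      μ = (((3 - Real.sqrt 5) / 2 : ℝ) : ℂ) ∨ μ = 1 ∨ μ = 2 ∨
        μ = (((3 + Real.sqrt 5) / 2 : ℝ) : ℂ)) := by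
  rw [ofReal_three_sub_sqrt_five_div_two, ofReal_three_add_sqrt_five_div_two]
  exact Mbar_eigenvalues_general Complex.ofRealHom hE (mod_cast Real.goldenRatio_sq)
end

section
/- Spectral equivalence is inherited by Schur complements: if 0 < α₀ ≤ β₀ and α₀ xᵀ G x ≤ xᵀ A x ≤ β₀ xᵀ G x for all x ∈ ℝⁿ, then for all y ∈ ℝᵐ, α₀ yᵀ (B A⁻¹ Bᵀ) y ≤ yᵀ (B G⁻¹ Bᵀ) y ≤ β₀ yᵀ (B A⁻¹ Bᵀ) y. -/
/-!
In the Loewner order the hypothesis reads `α • G ≤ A ≤ β • G`. Inversion reverses this order: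
the block matrix `[Q, 1; 1, P⁻¹]` has the Schur complements `Q - P` and `P⁻¹ - Q⁻¹`, so one is
positive semidefinite exactly when the other is. Congruence by `B` preserves the resulting
inequalities `α • A⁻¹ ≤ G⁻¹ ≤ β • A⁻¹`.
-/

open Matrix

section

variable {m n K : Type*} [Fintype n]

theorem posSemidef_sub_iff_forall_le {R : Type*} [Ring R] [PartialOrder R] [StarRing R]
    [IsOrderedAddMonoid R] {P Q : Matrix n n R} (hP : P.IsHermitian) (hQ : Q.IsHermitian) :
    (Q - P).PosSemidef ↔ ∀ x, star x ⬝ᵥ (P *ᵥ x) ≤ star x ⬝ᵥ (Q *ᵥ x) := by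
  simp only [posSemidef_iff_dotProduct_mulVec, hQ.sub hP, true_and, sub_mulVec, dotProduct_sub,
    sub_nonneg]

variable [DecidableEq n] [Field K]

theorem smul_inv_smul_matrix {c : K} (hc : c ≠ 0) (P : Matrix n n K) :
    c • (c • P)⁻¹ = P⁻¹ := by
  have := invertibleOfNonzero hc
  by_cases hP : IsUnit P.det
  · rw [inv_smul P c hP, smul_smul, mul_invOf_self, one_smul]
  · have hcP : ¬IsUnit (c • P).det := by simpa [det_smul, hc] using hP
    rw [nonsing_inv_apply_not_isUnit _ hP, nonsing_inv_apply_not_isUnit _ hcP, smul_zero]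

variable [PartialOrder K] [StarRing K] [StarOrderedRing K]

theorem posSemidef_inv_sub_inv {P Q : Matrix n n K} (hP : P.PosDef) (h : (Q - P).PosSemidef) :
    (P⁻¹ - Q⁻¹).PosSemidef := by
  have hQ : Q.PosDef := add_sub_cancel P Q ▸ hP.add_posSemidef h
  have := hP.isUnit.invertible
  have := hQ.isUnit.invertible
  have := hP.inv.isUnit.invertible
  have hblock : (fromBlocks Q 1 1ᴴ P⁻¹).PosSemidef :=
    (hP.inv.fromBlocks₂₂ Q 1).2 (by simpa using h)
  simpa using (hQ.fromBlocks₁₁ 1 P⁻¹).1 hblock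

theorem posSemidef_inv_sub_smul_inv {P Q : Matrix n n K} (hP : P.PosDef) {c : K} (hc : 0 < c)
    (h : (Q - c • P).PosSemidef) : (P⁻¹ - c • Q⁻¹).PosSemidef := by
  simpa only [smul_sub, smul_inv_smul_matrix hc.ne'] using
    (posSemidef_inv_sub_inv (hP.smul hc) h).smul hc.le

theorem posSemidef_smul_inv_sub_inv {P Q : Matrix n n K} (hP : P.PosDef) {c : K} (hc : 0 < c)
    (h : (c • Q - P).PosSemidef) : (c • P⁻¹ - Q⁻¹).PosSemidef := by
  simpa only [smul_sub, smul_inv_smul_matrix hc.ne'] using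
    (posSemidef_inv_sub_inv hP h).smul hc.le

theorem schur_complement_spectral_equivalence_general [Fintype m] {A G : Matrix n n K}
    (hA : A.PosDef) (hG : G.PosDef) (B : Matrix m n K) {α β : K} (hα : 0 < α) (hβ : 0 < β)
    (hlow : ∀ x, α * (star x ⬝ᵥ (G *ᵥ x)) ≤ star x ⬝ᵥ (A *ᵥ x))
    (hup : ∀ x, star x ⬝ᵥ (A *ᵥ x) ≤ β * (star x ⬝ᵥ (G *ᵥ x))) (y : m → K) :
    α * (star y ⬝ᵥ ((B * A⁻¹ * Bᴴ) *ᵥ y)) ≤ star y ⬝ᵥ ((B * G⁻¹ * Bᴴ) *ᵥ y) ∧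
      star y ⬝ᵥ ((B * G⁻¹ * Bᴴ) *ᵥ y) ≤ β * (star y ⬝ᵥ ((B * A⁻¹ * Bᴴ) *ᵥ y)) := by
  have hαG : (A - α • G).PosSemidef :=
    (posSemidef_sub_iff_forall_le (hG.smul hα).isHermitian hA.isHermitian).2
      (by simpa only [smul_mulVec, dotProduct_smul, smul_eq_mul] using hlow)
  have hβG : (β • G - A).PosSemidef :=
    (posSemidef_sub_iff_forall_le hA.isHermitian (hG.smul hβ).isHermitian).2
      (by simpa only [smul_mulVec, dotProduct_smul, smul_eq_mul] using hup)
  have hlow' := (posSemidef_inv_sub_smul_inv hG hα hαG).mul_mul_conjTranspose_same B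
  have hup' := (posSemidef_smul_inv_sub_inv hA hβ hβG).mul_mul_conjTranspose_same B
  constructor
  · simpa [Matrix.mul_sub, Matrix.sub_mul, sub_mulVec, smul_mulVec] using
      hlow'.dotProduct_mulVec_nonneg y
  · simpa [Matrix.mul_sub, Matrix.sub_mul, sub_mulVec, smul_mulVec] using
      hup'.dotProduct_mulVec_nonneg y

end

/-- spectral equivalence is inherited by Schur complements: if
`α₀ xᵀ G x ≤ xᵀ A x ≤ β₀ xᵀ G x` for all `x`, then
`α₀ yᵀ (B A⁻¹ Bᵀ) y ≤ yᵀ (B G⁻¹ Bᵀ) y ≤ β₀ yᵀ (B A⁻¹ Bᵀ) y` for all `y`. -/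
theorem schur_complement_spectral_equivalence
    (n m : ℕ) (hn : 0 < n) (hm : 0 < m) (hmn : m ≤ n)
    (A G : Matrix (Fin n) (Fin n) ℝ) (hA : A.PosDef) (hG : G.PosDef)
    (B : Matrix (Fin m) (Fin n) ℝ) (hB : B.rank = m)
    (α₀ β₀ : ℝ) (hα₀ : 0 < α₀) (hαβ : α₀ ≤ β₀)
    (hlow : ∀ x : Fin n → ℝ, α₀ * (x ⬝ᵥ (G *ᵥ x)) ≤ x ⬝ᵥ (A *ᵥ x))
    (hup : ∀ x : Fin n → ℝ, x ⬝ᵥ (A *ᵥ x) ≤ β₀ * (x ⬝ᵥ (G *ᵥ x))) :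
    ∀ y : Fin m → ℝ,
      α₀ * (y ⬝ᵥ ((B * A⁻¹ * Bᵀ) *ᵥ y)) ≤ y ⬝ᵥ ((B * G⁻¹ * Bᵀ) *ᵥ y) ∧
      y ⬝ᵥ ((B * G⁻¹ * Bᵀ) *ᵥ y) ≤ β₀ * (y ⬝ᵥ ((B * A⁻¹ * Bᵀ) *ᵥ y)) := by
  simpa only [star_trivial, conjTranspose_eq_transpose_of_trivial] using
    schur_complement_spectral_equivalence_general hA hG B hα₀ (hα₀.trans_le hαβ) hlow hup
end

section
/- Let H₁ and G be real symmetric positive definite n×n matrices that are spectrally equivalent: 0 < α₀ ≤ β₀ and α₀ xᵀ G x ≤ xᵀ H₁ x ≤ β₀ xᵀ G x for all x ∈ ℝⁿ. Then: (i) G and H₁ are H₁⁻¹-norm equivalent with explicit constants, namely 1/β₀ ≤ ‖G x‖_{H₁⁻¹} / ‖H₁ x‖_{H₁⁻¹} ≤ 1/α₀ for every nonzero x ∈ ℝⁿ; and (ii) H₁ and G are H₁⁻¹-field-of-values equivalent with explicit constants, namely xᵀ H₁⁻¹ (H₁ G⁻¹) x ≥ α₀ · xᵀ H₁⁻¹ x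 and ‖H₁ G⁻¹ x‖_{H₁⁻¹} ≤ β₀ · ‖x‖_{H₁⁻¹} for every x ∈ ℝⁿ. -/
open Matrix

/-- The `M`-vector norm `‖v‖_M = √(vᵀ M v)` for a (positive definite) matrix `M`. -/
noncomputable def vecNorm {k : Type*} [Fintype k] (M : Matrix k k ℝ) (v : k → ℝ) : ℝ :=
  Real.sqrt (v ⬝ᵥ (M *ᵥ v))

/-!
Inversion reverses the Loewner order, so `G ≤ c • H` gives `H⁻¹ ≤ c • G⁻¹`, and each spectral bound
can be used twice: once for the matrices and once for their inverses. For instance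
`G H⁻¹ G ≤ c • G G⁻¹ G = c • G ≤ c² • H = c² • H H⁻¹ H`, which is the bound
`‖G x‖_{H⁻¹} ≤ c ‖H x‖_{H⁻¹}`.
-/

section LoewnerOrder

open scoped ComplexOrder MatrixOrder

variable {𝕜 ι : Type*} [RCLike 𝕜] [Fintype ι] [DecidableEq ι] {A B : Matrix ι ι 𝕜} {c : ℝ}

theorem inv_le_inv_of_posDef_of_le (hA : A.PosDef) (hAB : A ≤ B) : B⁻¹ ≤ A⁻¹ := by
  have hB : B.PosDef := by simpa only [add_sub_cancel] using hA.add_posSemidef hAB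
  let := hB.isUnit.invertible
  let := hA.inv.isUnit.invertible
  -- `B - A` and `A⁻¹ - B⁻¹` are the two Schur complements of the block matrix `[B, 1; 1, A⁻¹]`.
  have hblock : (fromBlocks B 1 1ᴴ A⁻¹).PosSemidef := by
    rw [PosDef.fromBlocks₂₂ _ _ hA.inv]
    simpa [nonsing_inv_nonsing_inv A hA.det_pos.ne'.isUnit]
      using Matrix.le_iff.mp hAB
  simpa [Matrix.le_iff] using (PosDef.fromBlocks₁₁ _ _ hB).mp hblock

theorem inv_le_smul_inv_of_le_smul (hA : A.PosDef) (hc : 0 < c) (hAB : A ≤ c • B) :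
    B⁻¹ ≤ c • A⁻¹ := by
  have hdet := hA.det_pos.ne'.isUnit
  have hscaled : c⁻¹ • A ≤ B := by
    simpa [smul_smul, hc.ne'] using smul_le_smul_of_nonneg_left hAB (inv_nonneg.mpr hc.le)
  have hinv : (c⁻¹ • A)⁻¹ = c • A⁻¹ :=
    inv_eq_right_inv (by simp [smul_smul, hc.ne', mul_nonsing_inv A hdet])
  exact hinv ▸ inv_le_inv_of_posDef_of_le (hA.smul (inv_pos.mpr hc)) hscaled

theorem mul_inv_mul_le_sq_smul (hA : A.PosDef) (hc : 0 < c) (hAB : A ≤ c • B) :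
    A * B⁻¹ * A ≤ c ^ 2 • B :=
  have hdet := hA.det_pos.ne'.isUnit
  calc
    A * B⁻¹ * A ≤ A * (c • A⁻¹) * A :=
      IsSelfAdjoint.conjugate_le_conjugate (inv_le_smul_inv_of_le_smul hA hc hAB) hA.isHermitian
    _ = c • A := by simp [mul_nonsing_inv A hdet]
    _ ≤ c • c • B := smul_le_smul_of_nonneg_left hAB hc.le
    _ = c ^ 2 • B := by rw [smul_smul, sq]

theorem le_sq_smul_mul_inv_mul (hA : A.PosDef) (hB : B.PosDef) (hc : 0 < c) (hAB : A ≤ c • B) :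
    A ≤ c ^ 2 • (B * A⁻¹ * B) :=
  have hdet := hB.det_pos.ne'.isUnit
  calc
    A ≤ c • (B * B⁻¹ * B) := by rwa [mul_nonsing_inv B hdet, Matrix.one_mul]
    _ ≤ c • (B * (c • A⁻¹) * B) := smul_le_smul_of_nonneg_left
      (IsSelfAdjoint.conjugate_le_conjugate (inv_le_smul_inv_of_le_smul hA hc hAB) hB.isHermitian)
      hc.le
    _ = c ^ 2 • (B * A⁻¹ * B) := by simp [smul_smul, sq]

end LoewnerOrder

section VecNorm

open scoped MatrixOrder

variable {ι : Type*} [Fintype ι] {M N : Matrix ι ι ℝ} {c : ℝ}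

theorem le_of_forall_dotProduct_mulVec_le (hM : M.IsHermitian) (hN : N.IsHermitian)
    (h : ∀ x : ι → ℝ, x ⬝ᵥ (M *ᵥ x) ≤ x ⬝ᵥ (N *ᵥ x)) : M ≤ N :=
  PosSemidef.of_dotProduct_mulVec_nonneg (hN.sub hM) fun x => by
    simpa only [star_trivial, sub_mulVec, dotProduct_sub, sub_nonneg] using h x

theorem dotProduct_mulVec_le_of_le (hMN : M ≤ N) (x : ι → ℝ) :
    x ⬝ᵥ (M *ᵥ x) ≤ x ⬝ᵥ (N *ᵥ x) := by
  simpa only [star_trivial, sub_mulVec, dotProduct_sub, sub_nonneg]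
    using PosSemidef.dotProduct_mulVec_nonneg hMN x

theorem vecNorm_le_mul_vecNorm (hc : 0 ≤ c) (hMN : M ≤ c ^ 2 • N) (x : ι → ℝ) :
    vecNorm M x ≤ c * vecNorm N x :=
  calc
    vecNorm M x ≤ √(c ^ 2 * (x ⬝ᵥ (N *ᵥ x))) := Real.sqrt_le_sqrt <| by
      simpa only [smul_mulVec, dotProduct_smul, smul_eq_mul] using dotProduct_mulVec_le_of_le hMN x
    _ = c * vecNorm N x := by rw [Real.sqrt_mul (sq_nonneg c), Real.sqrt_sq hc, vecNorm]

theorem vecNorm_pos (hM : M.PosDef) {x : ι → ℝ} (hx : x ≠ 0) : 0 < vecNorm M x :=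
  Real.sqrt_pos.mpr (by simpa only [star_trivial] using hM.dotProduct_mulVec_pos hx)

theorem vecNorm_mulVec (hN : N.IsHermitian) (x : ι → ℝ) :
    vecNorm M (N *ᵥ x) = vecNorm (N * M * N) x := by
  have hNt : Nᵀ = N := hN
  simp only [vecNorm, ← mulVec_mulVec]
  rw [dotProduct_mulVec x N, ← mulVec_transpose, hNt]

end VecNorm

section NormEquivalence

open scoped MatrixOrder

variable {ι : Type*} [Fintype ι] [DecidableEq ι] {H G : Matrix ι ι ℝ} {c : ℝ}

theorem vecNorm_inv_mulVec_self (hH : H.PosDef) (x : ι → ℝ) :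
    vecNorm H⁻¹ (H *ᵥ x) = vecNorm H x := by
  rw [vecNorm_mulVec hH.isHermitian, mul_nonsing_inv H hH.det_pos.ne'.isUnit,
    Matrix.one_mul]

theorem vecNorm_inv_mulVec_le_of_le_smul (hG : G.PosDef) (hH : H.PosDef) (hc : 0 < c)
    (hGH : G ≤ c • H) (x : ι → ℝ) :
    vecNorm H⁻¹ (G *ᵥ x) ≤ c * vecNorm H⁻¹ (H *ᵥ x) := by
  rw [vecNorm_mulVec hG.isHermitian, vecNorm_inv_mulVec_self hH]
  exact vecNorm_le_mul_vecNorm hc.le (mul_inv_mul_le_sq_smul hG hc hGH) x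

theorem vecNorm_inv_mulVec_self_le_of_le_smul (hH : H.PosDef) (hG : G.PosDef) (hc : 0 < c)
    (hHG : H ≤ c • G) (x : ι → ℝ) :
    vecNorm H⁻¹ (H *ᵥ x) ≤ c * vecNorm H⁻¹ (G *ᵥ x) := by
  rw [vecNorm_mulVec hG.isHermitian, vecNorm_inv_mulVec_self hH]
  exact vecNorm_le_mul_vecNorm hc.le (le_sq_smul_mul_inv_mul hH hG hc hHG) x

theorem vecNorm_inv_mul_inv_mulVec_le_of_le_smul (hH : H.PosDef) (hG : G.PosDef) (hc : 0 < c)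
    (hHG : H ≤ c • G) (x : ι → ℝ) :
    vecNorm H⁻¹ ((H * G⁻¹) *ᵥ x) ≤ c * vecNorm H⁻¹ x := by
  simpa only [mulVec_mulVec, mul_nonsing_inv G hG.det_pos.ne'.isUnit, one_mulVec]
    using vecNorm_inv_mulVec_self_le_of_le_smul hH hG hc hHG (G⁻¹ *ᵥ x)

theorem dotProduct_inv_mulVec_le_of_le_smul (hG : G.PosDef) (hH : H.PosDef) (hc : 0 < c)
    (hGH : G ≤ c • H) (x : ι → ℝ) :
    x ⬝ᵥ (H⁻¹ *ᵥ x) ≤ c * (x ⬝ᵥ ((H⁻¹ * (H * G⁻¹)) *ᵥ x)) := by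
  rw [nonsing_inv_mul_cancel_left H _ hH.det_pos.ne'.isUnit]
  simpa only [smul_mulVec, dotProduct_smul, smul_eq_mul]
    using dotProduct_mulVec_le_of_le (inv_le_smul_inv_of_le_smul hG hc hGH) x

end NormEquivalence

open scoped MatrixOrder in
theorem spectral_equivalence_implies_norm_and_fov_equivalence_general
    {ι : Type*} [Fintype ι] [DecidableEq ι]
    {H₁ G : Matrix ι ι ℝ} (hH₁ : H₁.PosDef) (hG : G.PosDef)
    {α₀ β₀ : ℝ} (hα₀ : 0 < α₀) (hβ₀ : 0 < β₀)
    (hlow : ∀ x : ι → ℝ, α₀ * (x ⬝ᵥ (G *ᵥ x)) ≤ x ⬝ᵥ (H₁ *ᵥ x))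
    (hup : ∀ x : ι → ℝ, x ⬝ᵥ (H₁ *ᵥ x) ≤ β₀ * (x ⬝ᵥ (G *ᵥ x))) :
    (∀ x : ι → ℝ, x ≠ 0 →
      1 / β₀ ≤ vecNorm H₁⁻¹ (G *ᵥ x) / vecNorm H₁⁻¹ (H₁ *ᵥ x) ∧
      vecNorm H₁⁻¹ (G *ᵥ x) / vecNorm H₁⁻¹ (H₁ *ᵥ x) ≤ 1 / α₀) ∧
    (∀ x : ι → ℝ,
      α₀ * (x ⬝ᵥ (H₁⁻¹ *ᵥ x)) ≤ x ⬝ᵥ ((H₁⁻¹ * (H₁ * G⁻¹)) *ᵥ x) ∧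
      vecNorm H₁⁻¹ ((H₁ * G⁻¹) *ᵥ x) ≤ β₀ * vecNorm H₁⁻¹ x) := by
  have hα₀' : 0 < α₀⁻¹ := inv_pos.mpr hα₀
  have hGH : G ≤ α₀⁻¹ • H₁ := by
    refine le_of_forall_dotProduct_mulVec_le hG.1 (hH₁.smul hα₀').1 fun x => ?_
    simpa only [smul_mulVec, dotProduct_smul, smul_eq_mul, le_inv_mul_iff₀ hα₀] using hlow x
  have hHG : H₁ ≤ β₀ • G := by
    refine le_of_forall_dotProduct_mulVec_le hH₁.1 (hG.smul hβ₀).1 fun x => ?_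
    simpa only [smul_mulVec, dotProduct_smul, smul_eq_mul] using hup x
  refine ⟨fun x hx => ?_, fun x => ⟨?_, ?_⟩⟩
  · have hpos : 0 < vecNorm H₁⁻¹ (H₁ *ᵥ x) :=
      vecNorm_inv_mulVec_self hH₁ x ▸ vecNorm_pos hH₁ hx
    rw [one_div, one_div, le_div_iff₀ hpos, inv_mul_le_iff₀ hβ₀, div_le_iff₀ hpos]
    exact ⟨vecNorm_inv_mulVec_self_le_of_le_smul hH₁ hG hβ₀ hHG x,
      vecNorm_inv_mulVec_le_of_le_smul hG hH₁ hα₀' hGH x⟩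
  · exact (le_inv_mul_iff₀ hα₀).mp (dotProduct_inv_mulVec_le_of_le_smul hG hH₁ hα₀' hGH x)
  · exact vecNorm_inv_mul_inv_mulVec_le_of_le_smul hH₁ hG hβ₀ hHG x

/-- if `H₁` and `G` are spectrally equivalent
(`α₀ xᵀ G x ≤ xᵀ H₁ x ≤ β₀ xᵀ G x`), then (i) `G` and `H₁` are `H₁⁻¹`-norm equivalent with
constants `1/β₀` and `1/α₀`, and (ii) `H₁` and `G` are `H₁⁻¹`-field-of-values equivalent
with constants `α₀` and `β₀`. -/
theorem spectral_equivalence_implies_norm_and_fov_equivalence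
    (n : ℕ) (hn : 0 < n)
    (H₁ G : Matrix (Fin n) (Fin n) ℝ) (hH₁ : H₁.PosDef) (hG : G.PosDef)
    (α₀ β₀ : ℝ) (hα₀ : 0 < α₀) (hαβ : α₀ ≤ β₀)
    (hlow : ∀ x : Fin n → ℝ, α₀ * (x ⬝ᵥ (G *ᵥ x)) ≤ x ⬝ᵥ (H₁ *ᵥ x))
    (hup : ∀ x : Fin n → ℝ, x ⬝ᵥ (H₁ *ᵥ x) ≤ β₀ * (x ⬝ᵥ (G *ᵥ x))) :
    (∀ x : Fin n → ℝ, x ≠ 0 →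
      1 / β₀ ≤ vecNorm H₁⁻¹ (G *ᵥ x) / vecNorm H₁⁻¹ (H₁ *ᵥ x) ∧
      vecNorm H₁⁻¹ (G *ᵥ x) / vecNorm H₁⁻¹ (H₁ *ᵥ x) ≤ 1 / α₀) ∧
    (∀ x : Fin n → ℝ,
      α₀ * (x ⬝ᵥ (H₁⁻¹ *ᵥ x)) ≤ x ⬝ᵥ ((H₁⁻¹ * (H₁ * G⁻¹)) *ᵥ x) ∧
      vecNorm H₁⁻¹ ((H₁ * G⁻¹) *ᵥ x) ≤ β₀ * vecNorm H₁⁻¹ x) := by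
  exact spectral_equivalence_implies_norm_and_fov_equivalence_general hH₁ hG hα₀
    (hα₀.trans_le hαβ) hlow hup
end
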